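/- For finitely generated groups G and H, the rank of the free product G ∗ H (the minimal cardinality of a generating set) equals the rank of G plus the rank of H; in the paper's notation, n(G ⋆ H) = n(G) + n(H). -/

import Mathlib

open Monoid

/-- The rank of a group: the smallest cardinality of a (finite) generating set. -/
noncomputable def grpRank (G : Type*) [Group G] : ℕ :=
  sInf {k : ℕ | ∃ S : Finset G, S.card = k ∧ Subgroup.closure (S : Set G) = ⊤}

/-!
Grushko's inequality `rank G + rank H ≤ rank (G ∗ H)` comes from a statement about finite graphs
with vertices `V` and arrows `E` labelled in `G ∗ H`: if every label is realised by a path between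
every two vertices, then `|V| + rank G + rank H ≤ |E| + 1`. A generating set of `G ∗ H` is the case
of a single vertex.

Subdividing an arrow labelled `x * y` adds one vertex and one arrow, so every label may be taken in
`G` or in `H`. If there are two vertices, some path with label `1` is not closed, and by letting
`G ∗ H` act on a set amalgamated from a `G`-set and an `H`-set along the vertices, there is already
such a path, from `p` to `q`, inside one of the two colours. In that colour, `q` can be removed
together with one arrow leaving it, as the other arrows at `q` can be slid along this one; in the
other colour, `q` is merged with `p`. Because the path from `p` to `q` has label `1`, the two
operations are compatible. On a single vertex, projecting to `G` and to `H` gives the inequality.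
-/

section LabelledPath

variable {V W G K : Type*} [Group G] [Group K]

/-- `LabelledPath A u g v`: there is a path from `u` to `v` with label `g` that follows arrows of
`A` forwards or backwards. An element `(u, g, v)` of `A` is an arrow from `u` to `v` labelled `g`.
These paths are the arrows of the subgroupoid of `V × G × V` generated by `A`. -/
inductive LabelledPath (A : Set (V × G × V)) : V → G → V → Prop
  | of {u g v} : (u, g, v) ∈ A → LabelledPath A u g v
  | one (u) : LabelledPath A u 1 u
  | inv {u g v} : LabelledPath A u g v → LabelledPath A v g⁻¹ u
  | mul {u g v h w} : LabelledPath A u g v → LabelledPath A v h w → LabelledPath A u (g * h) w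

/-- The arrows `A` generate the whole connected groupoid `V × G × V`. -/
def Generates (A : Set (V × G × V)) : Prop :=
  ∀ u g v, LabelledPath A u g v

/-- A labelled graph is folded if its paths with trivial label are closed. -/
def IsFolded (A : Set (V × G × V)) : Prop :=
  ∀ u v, LabelledPath A u 1 v → u = v

/-- The action on arrows of a map of vertices and a map of labels. -/
def arrowMap (r : V → W) (f : G → K) : V × G × V → W × K × W :=
  Prod.map r (Prod.map f r)

namespace LabelledPath

variable {A : Set (V × G × V)} {u v : V} {g : G}

theorem gauge {B : Set (W × K × W)} (f : G →* K) (r : V → W) (m : V → K)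
    (h : ∀ u g v, (u, g, v) ∈ A → LabelledPath B (r u) (m u * f g * (m v)⁻¹) (r v))
    (p : LabelledPath A u g v) : LabelledPath B (r u) (m u * f g * (m v)⁻¹) (r v) := by
  induction p with
  | of ha => exact h _ _ _ ha
  | one u => simpa using one (r u)
  | inv _ ih => simpa [mul_assoc] using ih.inv
  | mul _ _ ih₁ ih₂ => simpa [mul_assoc] using ih₁.mul ih₂

theorem bind {B : Set (W × K × W)} (f : G →* K) (r : V → W)
    (h : ∀ u g v, (u, g, v) ∈ A → LabelledPath B (r u) (f g) (r v))
    (p : LabelledPath A u g v) : LabelledPath B (r u) (f g) (r v) := by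
  simpa using p.gauge f r (fun _ ↦ 1) (by simpa using h)

theorem map (f : G →* K) (r : V → W) (p : LabelledPath A u g v) :
    LabelledPath (arrowMap r f '' A) (r u) (f g) (r v) :=
  p.bind f r fun _ _ _ ha ↦ of ⟨_, ha, rfl⟩

theorem mono {B : Set (V × G × V)} (hAB : A ⊆ B) (p : LabelledPath A u g v) :
    LabelledPath B u g v :=
  p.bind (MonoidHom.id G) id fun _ _ _ ha ↦ of (hAB ha)

theorem label_mem (S : Subgroup G) (hS : ∀ a ∈ A, a.2.1 ∈ S) (p : LabelledPath A u g v) :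
    g ∈ S := by
  induction p with
  | of ha => exact hS _ ha
  | one => exact S.one_mem
  | inv _ ih => exact S.inv_mem ih
  | mul _ _ ih₁ ih₂ => exact S.mul_mem ih₁ ih₂

theorem exists_arrow_leaving (p : LabelledPath A u g v) (huv : u ≠ v) :
    ∃ w k, w ≠ u ∧ ((u, k, w) ∈ A ∨ (w, k⁻¹, u) ∈ A) := by
  by_contra! hA
  have stays : ∀ {x g y}, LabelledPath A x g y → (x = u ↔ y = u) := by
    intro x g y q
    induction q with
    | @of x g y ha =>
      constructor <;> rintro rfl <;> by_contra hne
      · exact (hA y g hne).1 ha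
      · exact (hA x g⁻¹ hne).2 (by simpa using ha)
    | one => rfl
    | inv _ ih => exact ih.symm
    | mul _ _ ih₁ ih₂ => exact ih₁.trans ih₂
  exact huv ((stays p).1 rfl).symm

end LabelledPath

theorem Generates.of_forall_mem {A B : Set (V × G × V)} (hA : Generates A)
    (h : ∀ u g v, (u, g, v) ∈ A → LabelledPath B u g v) : Generates B :=
  fun u g v ↦ (hA u g v).bind (MonoidHom.id G) id h

theorem Generates.closure_eq_top [Nonempty V] {A : Set (V × G × V)} (hA : Generates A)
    {f : G →* K} (hf : Function.Surjective f) {S : Set K}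
    (hS : ∀ a ∈ A, f a.2.1 ∈ Subgroup.closure S) : Subgroup.closure S = ⊤ := by
  obtain ⟨u⟩ := ‹Nonempty V›
  refine eq_top_iff.2 fun k _ ↦ ?_
  obtain ⟨g, rfl⟩ := hf k
  exact (hA u g u).label_mem ((Subgroup.closure S).comap f) hS

theorem generates_unit {S : Set G} (hS : Subgroup.closure S = ⊤) :
    Generates ((fun g ↦ ((), g, ())) '' S) := by
  rintro ⟨⟩ g ⟨⟩
  have hg : g ∈ Subgroup.closure S := hS ▸ Subgroup.mem_top g
  induction hg using Subgroup.closure_induction with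
  | mem x hx => exact .of ⟨x, hx, rfl⟩
  | one => exact .one _
  | mul x y _ _ hx hy => exact hx.mul hy
  | inv x _ hx => exact hx.inv

theorem Generates.subdivide {A : Set (V × G × V)} {u v : V} {x y : G}
    (hA : Generates (insert (u, x * y, v) A)) :
    Generates (insert (none, y, some v) (insert (some u, x, none) (arrowMap some id '' A))) := by
  set B := insert (none, y, some v) (insert (some u, x, none) (arrowMap some id '' A))
  have first : LabelledPath B (some u) x none := .of (by simp [B])
  have second : LabelledPath B none y (some v) := .of (by simp [B])
  have old : ∀ a g b, LabelledPath B (some a) g (some b) := by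
    refine fun a g b ↦ (hA a g b).bind (MonoidHom.id G) some ?_
    rintro a g b (hab | hab)
    · obtain ⟨rfl, rfl, rfl⟩ : a = u ∧ g = x * y ∧ b = v := by simpa using hab
      exact first.mul second
    · exact .of (.inr (.inr ⟨_, hab, rfl⟩))
  have to_old : ∀ a : Option V, ∃ b h, LabelledPath B a h (some b)
    | none => ⟨v, y, second⟩
    | some a => ⟨a, 1, .one _⟩
  intro a g b
  obtain ⟨a', h, pa⟩ := to_old a
  obtain ⟨b', k, pb⟩ := to_old b
  simpa [mul_assoc] using (pa.mul (old a' (h⁻¹ * g * k) b')).mul pb.inv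

end LabelledPath

section Subdivision

universe u

theorem arrowMap_some_id_injective {V L : Type*} :
    Function.Injective (arrowMap (some : V → Option V) (id : L → L)) :=
  (Option.some_injective V).prodMap (Function.injective_id.prodMap (Option.some_injective V))

variable {G : Type*} [Group G] {X : Set G}

theorem exists_subdivision_labels_mem (h1 : 1 ∈ X) {c : G} (hc : c ∈ Submonoid.closure X)
    {V : Type u} [Finite V] [Nonempty V] (E F : Finset (V × G × V)) (u v : V)
    (hE : ∀ e ∈ E, e.2.1 ∈ X) (h : Generates (insert (u, c, v) (E ∪ F : Set (V × G × V)))) :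
    ∃ (W : Type u) (_ : Finite W) (_ : Nonempty W) (E' F' : Finset (W × G × W)),
      (∀ e ∈ E', e.2.1 ∈ X) ∧ Generates (E' ∪ F' : Set (W × G × W)) ∧ F'.card = F.card ∧
      E'.card + Nat.card V ≤ E.card + 1 + Nat.card W := by
  classical
  induction hc using Submonoid.closure_induction_left generalizing V with
  | one =>
    refine ⟨V, ‹_›, ‹_›, insert (u, 1, v) E, F, (Finset.forall_mem_insert _ _ _).2 ⟨h1, hE⟩,
      by simpa [Set.insert_union] using h, rfl, ?_⟩
    have := Finset.card_insert_le (u, 1, v) E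
    omega
  | mul_left x hx y _ ih =>
    let E₁ := insert (some u, x, none) (E.image (arrowMap some id))
    let F₁ := F.image (arrowMap some id)
    obtain ⟨W, hW, hW', E', F', hE', h', hF', hcard⟩ := ih E₁ F₁ none (some v)
      ((Finset.forall_mem_insert _ _ _).2 ⟨hx, Finset.forall_mem_image.2 hE⟩)
      (by simpa [E₁, F₁, Set.image_union, Set.insert_union] using h.subdivide)
    refine ⟨W, hW, hW', E', F', hE', h',
      hF'.trans (Finset.card_image_of_injective _ arrowMap_some_id_injective), ?_⟩
    have hE₁ : E₁.card ≤ E.card + 1 :=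
      (Finset.card_insert_le _ _).trans (Nat.succ_le_succ Finset.card_image_le)
    rw [Finite.card_option] at hcard
    omega

theorem exists_generates_labels_mem (hX : Submonoid.closure X = ⊤) (h1 : 1 ∈ X)
    {V : Type u} [Finite V] [Nonempty V] (E F : Finset (V × G × V))
    (hE : ∀ e ∈ E, e.2.1 ∈ X) (h : Generates (E ∪ F : Set (V × G × V))) :
    ∃ (W : Type u) (_ : Finite W) (_ : Nonempty W) (E' : Finset (W × G × W)),
      (∀ e ∈ E', e.2.1 ∈ X) ∧ Generates (E' : Set (W × G × W)) ∧
      E'.card + Nat.card V ≤ E.card + F.card + Nat.card W := by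
  classical
  induction hn : F.card generalizing V with
  | zero =>
    obtain rfl := Finset.card_eq_zero.1 hn
    exact ⟨V, ‹_›, ‹_›, E, hE, by simpa using h, le_rfl⟩
  | succ n ih =>
    obtain ⟨⟨u, c, v⟩, F', -, rfl, hF'⟩ := Finset.card_eq_succ.1 hn
    obtain ⟨W, _, _, E₁, F₁, hE₁, h₁, hF₁, hcard₁⟩ := exists_subdivision_labels_mem h1
      (hX ▸ Submonoid.mem_top c) E F' u v hE (by simpa using h)
    obtain ⟨W', hW, hW', E₂, hE₂, h₂, hcard₂⟩ := ih E₁ F₁ hE₁ h₁ (hF₁.trans hF')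
    exact ⟨W', hW, hW', E₂, hE₂, h₂, by omega⟩

end Subdivision

section RemoveVertex

variable {V G : Type*} [Group G] {q : V}

section Redirect

variable [DecidableEq V]

/-- The retraction of `V` onto the complement of `q` that sends `q` to `p`. -/
def redirect (p : {v // v ≠ q}) (v : V) : {v // v ≠ q} :=
  if hv : v = q then p else ⟨v, hv⟩

theorem redirect_self (p : {v // v ≠ q}) : redirect p q = p :=
  dif_pos rfl

theorem redirect_coe (p v : {v // v ≠ q}) : redirect p v = v :=
  dif_neg v.2

theorem redirect_surjective (p : {v // v ≠ q}) : Function.Surjective (redirect p) :=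
  fun v ↦ ⟨v, redirect_coe p v⟩

theorem LabelledPath.redirect_endpoints {A : Set (V × G × V)} (p : {v // v ≠ q})
    (hpq : LabelledPath A p 1 q) {u v : V} {g : G} (huv : LabelledPath A u g v) :
    LabelledPath A (redirect p u) g (redirect p v) := by
  have to_redirect (w : V) : LabelledPath A (redirect p w) 1 w := by
    by_cases hw : w = q
    · subst hw
      rwa [redirect_self]
    · rw [redirect_coe p ⟨w, hw⟩]
      exact .one w
  simpa using ((to_redirect u).mul huv).mul (to_redirect v).inv

end Redirect

/-- Slide every arrow at `q` along an arrow of `A` leaving `q`; this one becomes trivial. -/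
theorem LabelledPath.exists_vertex_removal {A : Finset (V × G × V)} {g : G} {w : V}
    (hq : LabelledPath (A : Set (V × G × V)) q g w) (hqw : q ≠ w) :
    ∃ B : Finset ({v // v ≠ q} × G × {v // v ≠ q}), B.card < A.card ∧
      ∀ (u v : {v // v ≠ q}) (c : G), LabelledPath (A : Set (V × G × V)) u c v →
        LabelledPath (B : Set ({v // v ≠ q} × G × {v // v ≠ q})) u c v := by
  classical
  obtain ⟨f, k, hf, hk⟩ := hq.exists_arrow_leaving hqw
  let r : V → {v // v ≠ q} := redirect ⟨f, hf⟩
  let m : V → G := Function.update 1 q k⁻¹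
  let slide (a : V × G × V) : {v // v ≠ q} × G × {v // v ≠ q} :=
    (r a.1, m a.1 * a.2.1 * (m a.2.2)⁻¹, r a.2.2)
  have hrq : r q = ⟨f, hf⟩ := redirect_self _
  have hr (v : {v // v ≠ q}) : r v = v := redirect_coe _ v
  have hmq : m q = k⁻¹ := Function.update_self ..
  have hm (v : {v // v ≠ q}) : m v = 1 := Function.update_of_ne v.2 ..
  obtain ⟨a, ha, ha_slide⟩ : ∃ a ∈ A, slide a = (⟨f, hf⟩, 1, ⟨f, hf⟩) := by
    have hrf := hr ⟨f, hf⟩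
    have hmf := hm ⟨f, hf⟩
    rcases hk with hk | hk
    · exact ⟨_, hk, by simp [slide, hrq, hrf, hmq, hmf]⟩
    · exact ⟨_, hk, by simp [slide, hrq, hrf, hmq, hmf]⟩
  refine ⟨(A.erase a).image slide,
    Finset.card_image_le.trans_lt (Finset.card_erase_lt_of_mem ha), fun u v c p ↦ ?_⟩
  have slid := p.gauge (MonoidHom.id G) r m
    (B := ((A.erase a).image slide : Finset ({v // v ≠ q} × G × {v // v ≠ q}))) ?_
  · simpa [hr, hm] using slid
  intro x c y hxy
  by_cases hxa : (x, c, y) = a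
  · obtain ⟨hx, hc, hy⟩ : r x = ⟨f, hf⟩ ∧ m x * c * (m y)⁻¹ = 1 ∧ r y = ⟨f, hf⟩ := by
      simpa [slide, ← hxa] using ha_slide
    rw [MonoidHom.id_apply, hx, hc, hy]
    exact .one _
  · exact .of (Finset.mem_image_of_mem slide (Finset.mem_erase.2 ⟨hxa, hxy⟩))

end RemoveVertex

section Coprod

variable {V W G H : Type*} [Group G] [Group H]

/-- The graph with labels in `G ∗ H` formed by the arrows `A` labelled in `G` and the arrows `B`
labelled in `H`. -/
def coprodArrows (A : Set (V × G × V)) (B : Set (V × H × V)) : Set (V × Coprod G H × V) :=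
  arrowMap id Coprod.inl '' A ∪ arrowMap id Coprod.inr '' B

theorem exists_coprod_perm {Y Z : Type*} [Finite V] [MulAction G Y] [MulAction H Z] {i : V → Y}
    {j : V → Z} (hi : Function.Injective i) (hj : Function.Injective j) :
    ∃ (φ : Coprod G H →* Equiv.Perm (Y ⊕ Z)) (k : V → Y ⊕ Z), Function.Injective k ∧
      (∀ g u v, g • i v = i u → φ (Coprod.inl g) (k v) = k u) ∧
      (∀ h u v, h • j v = j u → φ (Coprod.inr h) (k v) = k u) := by
  obtain ⟨σ, hσ⟩ := Equiv.Perm.exists_extending_pair (Sum.inl ∘ i : V → Y ⊕ Z) (Sum.inr ∘ j)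
    (Sum.inl_injective.comp hi) (Sum.inr_injective.comp hj)
  have hσ (v : V) : σ (Sum.inl (i v)) = Sum.inr (j v) := by simpa using hσ v
  let ψ := Equiv.Perm.sumCongrHom Y Z
  refine ⟨Coprod.lift
    (ψ.comp ((MonoidHom.inl _ _).comp (MulAction.toPermHom G Y)))
    ((MulAut.conj σ⁻¹).toMonoidHom.comp
      (ψ.comp ((MonoidHom.inr _ _).comp (MulAction.toPermHom H Z)))),
    Sum.inl ∘ i, Sum.inl_injective.comp hi, fun g u v h ↦ ?_, fun h u v huv ↦ ?_⟩
  · simp [ψ, h]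
  · simp [ψ, hσ, huv, Equiv.symm_apply_eq]

namespace LabelledPath

variable {A : Set (V × G × V)}

/-- The labels of the paths of `A` that start at `u`, sorted by endpoint. In the `G`-set
`V → Set G` these families realise the vertices of a folded graph as points permuted by the labels
of the paths. -/
def labels (A : Set (V × G × V)) (u : V) : V → Set G :=
  fun v ↦ {g | LabelledPath A u g v}

theorem labels_injective (hA : IsFolded A) : Function.Injective (labels A) := by
  intro u v huv
  have hv : (1 : G) ∈ labels A v v := one v
  rw [← huv] at hv
  exact hA u v hv

open scoped Pointwise in
theorem smul_labels {u v : V} {g : G} (p : LabelledPath A u g v) :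
    g • labels A v = labels A u := by
  ext w c
  rw [Pi.smul_apply, Set.mem_smul_set_iff_inv_smul_mem, smul_eq_mul]
  refine ⟨fun q ↦ ?_, fun q ↦ p.inv.mul q⟩
  rw [← mul_inv_cancel_left g c]
  exact p.mul q

end LabelledPath

open scoped Pointwise in
theorem isFolded_coprodArrows [Finite V] {A : Set (V × G × V)} {B : Set (V × H × V)}
    (hA : IsFolded A) (hB : IsFolded B) : IsFolded (coprodArrows A B) := by
  obtain ⟨φ, k, hk, hφG, hφH⟩ := exists_coprod_perm (G := G) (H := H)
    (LabelledPath.labels_injective hA) (LabelledPath.labels_injective hB)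
  have key : ∀ {u c v}, LabelledPath (coprodArrows A B) u c v → φ c (k v) = k u := by
    intro u c v p
    induction p with
    | of h =>
      rcases h with ⟨⟨u, g, v⟩, ha, ⟨⟩⟩ | ⟨⟨u, h, v⟩, hb, ⟨⟩⟩
      · exact hφG g u v (LabelledPath.smul_labels (.of ha))
      · exact hφH h u v (LabelledPath.smul_labels (.of hb))
    | one => simp
    | inv _ ih => simp [← ih]
    | mul _ _ ih₁ ih₂ => rw [map_mul, Equiv.Perm.mul_apply, ih₂, ih₁]
  intro u v p
  simpa using (hk (by simpa using key p)).symm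

theorem Generates.coprodArrows_of_surjective {A : Set (V × G × V)} {B : Set (V × H × V)}
    {A' : Set (W × G × W)} {B' : Set (W × H × W)} (h : Generates (coprodArrows A B))
    {r : V → W} (hr : Function.Surjective r)
    (hA : ∀ u g v, LabelledPath A u g v → LabelledPath A' (r u) g (r v))
    (hB : ∀ u g v, LabelledPath B u g v → LabelledPath B' (r u) g (r v)) :
    Generates (coprodArrows A' B') := by
  intro u c v
  obtain ⟨u, rfl⟩ := hr u
  obtain ⟨v, rfl⟩ := hr v
  refine (h u c v).bind (MonoidHom.id _) r ?_
  rintro _ _ _ (⟨⟨u, g, v⟩, ha, ⟨⟩⟩ | ⟨⟨u, g, v⟩, hb, ⟨⟩⟩)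
  · exact ((hA u g v (.of ha)).map (Coprod.inl (N := H)) id).mono Set.subset_union_left
  · exact ((hB u g v (.of hb)).map (Coprod.inr (M := G)) id).mono Set.subset_union_right

end Coprod

section Rank

theorem grpRank_le_card {G : Type*} [Group G] {S : Finset G}
    (hS : Subgroup.closure (S : Set G) = ⊤) : grpRank G ≤ S.card :=
  Nat.sInf_le ⟨S, rfl, hS⟩

theorem exists_card_eq_grpRank (G : Type*) [Group G] [Group.FG G] :
    ∃ S : Finset G, S.card = grpRank G ∧ Subgroup.closure (S : Set G) = ⊤ := by
  obtain ⟨S, hS⟩ := Group.FG.out (G := G)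
  exact Nat.sInf_mem (s := {k | ∃ S : Finset G, S.card = k ∧ Subgroup.closure (S : Set G) = ⊤})
    ⟨_, S, rfl, hS⟩

variable {V G H K : Type*} [Group G] [Group H] [Group K]

theorem grpRank_le_card_of_generates [Nonempty V] {E : Set (V × K × V)} (hE : Generates E)
    {f : K →* G} (hf : Function.Surjective f) {A : Finset (V × G × V)}
    (hA : ∀ e ∈ E, f e.2.1 = 1 ∨ ∃ a ∈ A, a.2.1 = f e.2.1) : grpRank G ≤ A.card := by
  classical
  refine (grpRank_le_card (S := A.image (·.2.1)) (hE.closure_eq_top hf fun e he ↦ ?_)).trans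
    Finset.card_image_le
  rcases hA e he with h | h
  · exact h ▸ Subgroup.one_mem _
  · exact Subgroup.subset_closure (Finset.mem_coe.2 (Finset.mem_image.2 h))

theorem grpRank_le_card_coprodArrows [Nonempty V] {A : Finset (V × G × V)}
    {B : Finset (V × H × V)}
    (h : Generates (coprodArrows (A : Set (V × G × V)) (B : Set (V × H × V)))) :
    grpRank G ≤ A.card ∧ grpRank H ≤ B.card := by
  constructor
  · refine grpRank_le_card_of_generates h Coprod.fst_surjective ?_
    rintro _ (⟨a, ha, rfl⟩ | ⟨_, _, rfl⟩)
    · exact .inr ⟨a, ha, (Coprod.fst_apply_inl _).symm⟩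
    · exact .inl (Coprod.fst_apply_inr _)
  · refine grpRank_le_card_of_generates h Coprod.snd_surjective ?_
    rintro _ (⟨_, _, rfl⟩ | ⟨b, hb, rfl⟩)
    · exact .inl (Coprod.snd_apply_inl _)
    · exact .inr ⟨b, hb, (Coprod.snd_apply_inr _).symm⟩

theorem exists_merge_coprodArrows {A : Finset (V × G × V)} {B : Finset (V × H × V)}
    (h : Generates (coprodArrows (A : Set (V × G × V)) (B : Set (V × H × V)))) {p q : V}
    (hpq : p ≠ q) (hp : LabelledPath (A : Set (V × G × V)) p 1 q ∨
      LabelledPath (B : Set (V × H × V)) p 1 q) :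
    ∃ (A' : Finset ({v // v ≠ q} × G × {v // v ≠ q}))
      (B' : Finset ({v // v ≠ q} × H × {v // v ≠ q})), A'.card + B'.card < A.card + B.card ∧
      Generates (coprodArrows (A' : Set ({v // v ≠ q} × G × {v // v ≠ q}))
        (B' : Set ({v // v ≠ q} × H × {v // v ≠ q}))) := by
  classical
  let r : V → {v // v ≠ q} := redirect ⟨p, hpq⟩
  have hr : Function.Surjective r := redirect_surjective _
  rcases hp with hp | hp
  · obtain ⟨A', hcard, hA'⟩ := hp.inv.exists_vertex_removal hpq.symm
    refine ⟨A', B.image (arrowMap r id), add_lt_add_of_lt_of_le hcard Finset.card_image_le,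
      h.coprodArrows_of_surjective hr (fun u g v p ↦ hA' _ _ _ (hp.redirect_endpoints ⟨_, hpq⟩ p))
        fun u g v p ↦ ?_⟩
    simpa using p.map (MonoidHom.id H) r
  · obtain ⟨B', hcard, hB'⟩ := hp.inv.exists_vertex_removal hpq.symm
    refine ⟨A.image (arrowMap r id), B', add_lt_add_of_le_of_lt Finset.card_image_le hcard,
      h.coprodArrows_of_surjective hr (fun u g v p ↦ ?_)
        fun u g v p ↦ hB' _ _ _ (hp.redirect_endpoints ⟨_, hpq⟩ p)⟩
    simpa using p.map (MonoidHom.id G) r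

theorem card_add_grpRank_le_of_coprodArrows [Finite V] [Nonempty V] (A : Finset (V × G × V))
    (B : Finset (V × H × V))
    (h : Generates (coprodArrows (A : Set (V × G × V)) (B : Set (V × H × V)))) :
    Nat.card V + grpRank G + grpRank H ≤ A.card + B.card + 1 := by
  classical
  induction hn : Nat.card V generalizing V with
  | zero => exact absurd hn Nat.card_pos.ne'
  | succ n ih =>
    cases subsingleton_or_nontrivial V with
    | inl _ =>
      have hV : Nat.card V ≤ 1 := Finite.card_le_one_iff_subsingleton.2 ‹_›
      obtain ⟨hA, hB⟩ := grpRank_le_card_coprodArrows h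
      omega
    | inr _ =>
      obtain ⟨p, q, hpq, hp⟩ : ∃ p q : V, p ≠ q ∧ (LabelledPath (A : Set (V × G × V)) p 1 q ∨
          LabelledPath (B : Set (V × H × V)) p 1 q) := by
        by_contra! hfold
        obtain ⟨x, y, hxy⟩ := exists_pair_ne V
        refine hxy (isFolded_coprodArrows (fun p q hp ↦ ?_) (fun p q hp ↦ ?_) x y (h x 1 y))
        · exact by_contra fun hpq ↦ (hfold p q hpq).1 hp
        · exact by_contra fun hpq ↦ (hfold p q hpq).2 hp
      have : Nonempty {v // v ≠ q} := ⟨⟨p, hpq⟩⟩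
      have hcard : Nat.card {v // v ≠ q} + 1 = Nat.card V := by
        rw [← Finite.card_option, Nat.card_congr (Equiv.optionSubtypeNe q)]
      obtain ⟨A', B', hlt, h'⟩ := exists_merge_coprodArrows h hpq hp
      have := ih A' B' h' (by omega)
      omega

theorem card_add_grpRank_le_of_labels_mem [Finite V] [Nonempty V]
    (E : Finset (V × Coprod G H × V))
    (hE : ∀ e ∈ E, e.2.1 ∈ Set.range Coprod.inl ∪ Set.range Coprod.inr)
    (h : Generates (E : Set (V × Coprod G H × V))) :
    Nat.card V + grpRank G + grpRank H ≤ E.card + 1 := by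
  classical
  let isLeft (e : V × Coprod G H × V) : Prop := e.2.1 ∈ Set.range Coprod.inl
  let A := (E.filter isLeft).image (arrowMap id Coprod.fst)
  let B := (E.filter (¬ isLeft ·)).image (arrowMap id Coprod.snd)
  have hAB : Generates (coprodArrows (A : Set (V × G × V)) (B : Set (V × H × V))) := by
    refine h.of_forall_mem fun u c v he ↦ .of ?_
    by_cases hc : c ∈ Set.range Coprod.inl
    · obtain ⟨g, rfl⟩ := hc
      refine .inl ⟨(u, g, v), Finset.mem_image.2 ⟨_, Finset.mem_filter.2 ⟨he, ⟨g, rfl⟩⟩, ?_⟩, rfl⟩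
      simp [arrowMap]
    · obtain ⟨x, rfl⟩ := (hE _ he).resolve_left hc
      refine .inr ⟨(u, x, v), Finset.mem_image.2 ⟨_, Finset.mem_filter.2 ⟨he, hc⟩, ?_⟩, rfl⟩
      simp [arrowMap]
  have hA : A.card ≤ (E.filter isLeft).card := Finset.card_image_le
  have hB : B.card ≤ (E.filter (¬ isLeft ·)).card := Finset.card_image_le
  have hcard := E.card_filter_add_card_filter_not isLeft
  have := card_add_grpRank_le_of_coprodArrows A B hAB
  omega

theorem grpRank_add_grpRank_le_card {S : Finset (Coprod G H)}
    (hS : Subgroup.closure (S : Set (Coprod G H)) = ⊤) : grpRank G + grpRank H ≤ S.card := by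
  classical
  have hX : Submonoid.closure (Set.range Coprod.inl ∪ Set.range Coprod.inr) =
      (⊤ : Submonoid (Coprod G H)) := Coprod.mclosure_range_inl_union_inr
  have hcard : (S.image fun c ↦ ((), c, ())).card ≤ S.card := Finset.card_image_le
  obtain ⟨V, _, _, E, hE, h, hVE⟩ := exists_generates_labels_mem hX (.inl ⟨1, map_one _⟩) ∅
    (S.image fun c ↦ ((), c, ())) (by simp) (by simpa using generates_unit hS)
  have := card_add_grpRank_le_of_labels_mem E hE h
  rw [Nat.card_unique, Finset.card_empty] at hVE
  omega

theorem exists_closure_coprod_eq_top {S : Finset G} {T : Finset H}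
    (hS : Subgroup.closure (S : Set G) = ⊤) (hT : Subgroup.closure (T : Set H) = ⊤) :
    ∃ U : Finset (Coprod G H), U.card ≤ S.card + T.card ∧
      Subgroup.closure (U : Set (Coprod G H)) = ⊤ := by
  classical
  refine ⟨S.image Coprod.inl ∪ T.image Coprod.inr, (Finset.card_union_le _ _).trans
    (add_le_add Finset.card_image_le Finset.card_image_le), ?_⟩
  rw [Finset.coe_union, Finset.coe_image, Finset.coe_image, Subgroup.closure_union,
    ← MonoidHom.map_closure, ← MonoidHom.map_closure, hS, hT, ← MonoidHom.range_eq_map,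
    ← MonoidHom.range_eq_map, Coprod.range_inl_sup_range_inr]

end Rank

/-- For finitely generated groups `G` and `H`, the rank of the free product `G ∗ H`
equals the rank of `G` plus the rank of `H`: `n(G ⋆ H) = n(G) + n(H)`. -/
theorem rank_coprod (G H : Type*) [Group G] [Group H] [Group.FG G] [Group.FG H] :
    grpRank (Monoid.Coprod G H) = grpRank G + grpRank H := by
  obtain ⟨S, hScard, hS⟩ := exists_card_eq_grpRank G
  obtain ⟨T, hTcard, hT⟩ := exists_card_eq_grpRank H
  obtain ⟨U, hUcard, hU⟩ := exists_closure_coprod_eq_top hS hT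
  apply le_antisymm
  · rw [← hScard, ← hTcard]
    exact (grpRank_le_card hU).trans hUcard
  · refine le_csInf ⟨_, U, rfl, hU⟩ ?_
    rintro _ ⟨S', rfl, hS'⟩
    exact grpRank_add_grpRank_le_card hS'
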